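/- (Pfaff-transformed evaluation.) One has ₂F₁(1/3, 1/3; 1; (√3 − 2)/(3√3)) = (3^{3/8} / (2^{1/12} · 4 · π^{3/2})) · (√3 + 1)^{1/6} · Γ(1/4)², where Γ is the Gamma function. (The argument (√3 − 2)/(3√3) ≈ −0.0516 lies in (−1,1), so the hypergeometric series converges absolutely.) -/

import Mathlib

open Real

/-- Gauss hypergeometric function ₂F₁ defined via its power series
    (the tsum; converges absolutely for |z| < 1). -/
noncomputable def hyp2F1 (a b c z : ℝ) : ℝ :=
  ∑' n : ℕ, ((ascPochhammer ℝ n).eval a * (ascPochhammer ℝ n).eval b /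
      (ascPochhammer ℝ n).eval c) * z ^ n / (Nat.factorial n)

/-!
Pfaff's transformation turns `₂F₁(1/3, 1/3; 1; z)` into `₂F₁(1/3, 2/3; 1; α)` with
`α = (3√3 - 5) / 4`. By Bateman's integral, `π ₂F₁(1/3, 2/3; 1; α)` is the integral of
`₂F₁(1/3, 2/3; 1/2; α t)` against `dt / √(t (1 - t))`, and that function is elementary:
`cos θ ₂F₁(a, 1 - a; 1/2; sin² θ) = cos ((1 - 2 a) θ)`. With `a = 1/3` and `θ = 3 ψ`, the variable
`v = sin² ψ` parametrizes `sin² θ = v (3 - 4 v)²` and makes the integral a complete elliptic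
integral. For this `α`, a root of `8 α² + 20 α = 1`, the underlying elliptic curve is 3-isogenous to
the lemniscatic curve `y² = x³ - x`, so that the integral is a multiple of `B(1/4, 1/2)`.
-/

open MeasureTheory Set ProbabilityTheory
open scoped ENNReal Interval

theorem hyp2F1_eq_ordinaryHypergeometric (a b c z : ℝ) : hyp2F1 a b c z = ₂F₁ a b c z := by
  rw [ordinaryHypergeometric_eq_tsum]
  exact tsum_congr fun n ↦ by rw [smul_eq_mul]; ring

theorem hasSum_deriv_of_hasFPowerSeriesOnBall {𝕜 E : Type*} [NontriviallyNormedField 𝕜]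
    [NormedAddCommGroup E] [NormedSpace 𝕜 E] {f : 𝕜 → E} {p : FormalMultilinearSeries 𝕜 𝕜 E}
    {x y : 𝕜} {r : ℝ≥0∞} {f' : E} (hp : HasFPowerSeriesOnBall f p x r)
    (hy : y ∈ Metric.eball (0 : 𝕜) r) (hf : HasDerivAt f f' (x + y)) :
    HasSum (fun n : ℕ ↦ y ^ n • (n + 1) • p.coeff (n + 1)) f' := by
  rw [← hasFPowerSeriesWithinOnBall_univ] at hp
  have h := hp.hasSum_derivSeries_of_hasFDerivWithinAt (f' := .toSpanSingleton 𝕜 f')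
    (by simpa [enorm_eq_nnnorm] using hy) (by simp) (by simpa using! hf.hasFDerivAt)
    (by simp)
  have := h.mapL (ContinuousLinearMap.apply 𝕜 E (1 : 𝕜))
  simpa using this

section PowerSeries

variable {𝕂 : Type*} [RCLike 𝕂]

theorem one_le_radius_ordinaryHypergeometricSeries (𝔸 : Type*) [NormedDivisionRing 𝔸]
    [NormedAlgebra 𝕂 𝔸] (a b c : 𝕂) : 1 ≤ (ordinaryHypergeometricSeries 𝔸 a b c).radius := by
  by_cases! h : ∀ k : ℕ, (k : 𝕂) ≠ -a ∧ (k : 𝕂) ≠ -b ∧ (k : 𝕂) ≠ -c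
  · exact (ordinaryHypergeometricSeries_radius_eq_one 𝔸 a b c h).ge
  · obtain ⟨k, hk⟩ := h
    suffices (ordinaryHypergeometricSeries 𝔸 a b c).radius = ⊤ from this ▸ le_top
    by_cases ha : (k : 𝕂) = -a
    · rw [← neg_eq_iff_eq_neg.mpr ha]
      exact ordinaryHypergeometric_radius_top_of_neg_nat₁ 𝔸 b c
    by_cases hb : (k : 𝕂) = -b
    · rw [← neg_eq_iff_eq_neg.mpr hb]
      exact ordinaryHypergeometric_radius_top_of_neg_nat₂ 𝔸 a c
    · rw [← neg_eq_iff_eq_neg.mpr (hk ha hb)]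
      exact ordinaryHypergeometric_radius_top_of_neg_nat₃ 𝔸 a b

theorem hasFPowerSeriesOnBall_ordinaryHypergeometric (a b c : 𝕂) :
    HasFPowerSeriesOnBall (₂F₁ a b c : 𝕂 → 𝕂) (ordinaryHypergeometricSeries 𝕂 a b c) 0 1 :=
  have h := one_le_radius_ordinaryHypergeometricSeries 𝕂 a b c
  ((ordinaryHypergeometricSeries 𝕂 a b c).hasFPowerSeriesOnBall
    (zero_lt_one.trans_le h)).mono one_pos h

variable {x : 𝕂}

theorem hasSum_ordinaryHypergeometric (a b c : 𝕂) (hx : ‖x‖ < 1) :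
    HasSum (fun n ↦ ordinaryHypergeometricCoefficient a b c n * x ^ n) (₂F₁ a b c x) := by
  have h := (hasFPowerSeriesOnBall_ordinaryHypergeometric a b c).hasSum (y := x)
    (by simpa [enorm_eq_nnnorm, ← NNReal.coe_lt_one] using hx)
  simpa only [ordinaryHypergeometricSeries_apply_eq, zero_add, smul_eq_mul] using h

theorem differentiableAt_ordinaryHypergeometric (a b c : 𝕂) (hx : ‖x‖ < 1) :
    DifferentiableAt 𝕂 (₂F₁ a b c) x :=
  (hasFPowerSeriesOnBall_ordinaryHypergeometric a b c).analyticAt_of_mem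
    (by simpa [enorm_eq_nnnorm, ← NNReal.coe_lt_one] using hx) |>.differentiableAt

theorem hasSum_deriv_ordinaryHypergeometric (a b c : 𝕂) (hx : ‖x‖ < 1) :
    HasSum (fun n : ℕ ↦ (n + 1) * ordinaryHypergeometricCoefficient a b c (n + 1) * x ^ n)
      (deriv (₂F₁ a b c) x) := by
  have h := hasSum_deriv_of_hasFPowerSeriesOnBall
    (hasFPowerSeriesOnBall_ordinaryHypergeometric a b c) (y := x) (f' := deriv (₂F₁ a b c) x)
    (by simpa [enorm_eq_nnnorm, ← NNReal.coe_lt_one] using hx)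
    (by simpa using (differentiableAt_ordinaryHypergeometric a b c hx).hasDerivAt)
  refine h.congr_fun fun n ↦ ?_
  rw [ordinaryHypergeometricSeries, FormalMultilinearSeries.coeff_ofScalars, smul_eq_mul,
    nsmul_eq_mul]
  push_cast
  ring

theorem ordinaryHypergeometricCoefficient_succ (a b c : 𝕂) (n : ℕ) :
    (n + 1) * ordinaryHypergeometricCoefficient a b c (n + 1) =
      (a + n) * (b + n) / (c + n) * ordinaryHypergeometricCoefficient a b c n := by
  have hn : (n + 1 : 𝕂) ≠ 0 := by exact_mod_cast n.succ_ne_zero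
  simp only [ordinaryHypergeometricCoefficient, ascPochhammer_succ_eval, Nat.factorial_succ,
    Nat.cast_mul, Nat.cast_succ, mul_inv]
  field_simp

theorem add_natCast_mul_ordinaryHypergeometricCoefficient_add_one (a b : 𝕂) {c : 𝕂}
    (hc : ∀ k : ℕ, (k : 𝕂) ≠ -c) (n : ℕ) :
    (c + n) * ordinaryHypergeometricCoefficient a b (c + 1) n =
      c * ordinaryHypergeometricCoefficient a b c n := by
  have hshift : (ascPochhammer 𝕂 n).eval c * (c + n) = c * (ascPochhammer 𝕂 n).eval (c + 1) := by
    rw [← ascPochhammer_succ_eval, ascPochhammer_succ_left]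
    simp
  have h₀ : (ascPochhammer 𝕂 n).eval c ≠ 0 := fun h ↦
    let ⟨k, _, hk⟩ := (ascPochhammer_eval_eq_zero_iff n c).1 h
    hc k hk
  have h₁ : (ascPochhammer 𝕂 n).eval (c + 1) ≠ 0 := fun h ↦
    let ⟨k, _, hk⟩ := (ascPochhammer_eval_eq_zero_iff n (c + 1)).1 h
    hc (k + 1) (by push_cast; linear_combination hk)
  rw [← mul_left_inj' h₀, ← mul_left_inj' h₁]
  field_simp
  linear_combination
    (n.factorial : 𝕂)⁻¹ * (ascPochhammer 𝕂 n).eval a * (ascPochhammer 𝕂 n).eval b * hshift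

theorem hasSum_mul_deriv_ordinaryHypergeometric (a b c : 𝕂) (hx : ‖x‖ < 1) :
    HasSum (fun n : ℕ ↦ n * ordinaryHypergeometricCoefficient a b c n * x ^ n)
      (x * deriv (₂F₁ a b c) x) := by
  refine (hasSum_nat_add_iff' 1).mp ?_
  simp only [Finset.range_one, Finset.sum_singleton, Nat.cast_zero, zero_mul, sub_zero]
  refine ((hasSum_deriv_ordinaryHypergeometric a b c hx).mul_left x).congr_fun fun n ↦ ?_
  push_cast
  ring

theorem mul_deriv_ordinaryHypergeometric_add_one (a b : 𝕂) {c : 𝕂}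
    (hc : ∀ k : ℕ, (k : 𝕂) ≠ -c) (hx : ‖x‖ < 1) :
    x * deriv (₂F₁ a b (c + 1)) x = c * (₂F₁ a b c x - ₂F₁ a b (c + 1) x) := by
  refine (hasSum_mul_deriv_ordinaryHypergeometric a b (c + 1) hx).unique ?_
  refine (((hasSum_ordinaryHypergeometric a b c hx).sub
    (hasSum_ordinaryHypergeometric a b (c + 1) hx)).mul_left c).congr_fun fun n ↦ ?_
  linear_combination
    x ^ n * add_natCast_mul_ordinaryHypergeometricCoefficient_add_one a b hc n

theorem mul_one_sub_mul_deriv_ordinaryHypergeometric (a b : 𝕂) {c : 𝕂}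
    (hc : ∀ k : ℕ, (k : 𝕂) ≠ -c) (hx : ‖x‖ < 1) :
    c * (1 - x) * deriv (₂F₁ a b c) x =
      (c - a) * (c - b) * ₂F₁ a b (c + 1) x + c * (a + b - c) * ₂F₁ a b c x := by
  have h := ((hasSum_deriv_ordinaryHypergeometric a b c hx).sub
    (hasSum_mul_deriv_ordinaryHypergeometric a b c hx)).mul_left c
  rw [← one_sub_mul, ← mul_assoc] at h
  refine h.unique ?_
  refine (((hasSum_ordinaryHypergeometric a b (c + 1) hx).mul_left ((c - a) * (c - b))).add
    ((hasSum_ordinaryHypergeometric a b c hx).mul_left (c * (a + b - c)))).congr_fun fun n ↦ ?_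
  have hn : c + n ≠ 0 := fun h ↦ hc n (eq_neg_of_add_eq_zero_right h)
  have h₁ := ordinaryHypergeometricCoefficient_succ a b c n
  have h₂ := add_natCast_mul_ordinaryHypergeometricCoefficient_add_one a b hc n
  rw [mul_comm, ← eq_div_iff hn] at h₂
  rw [h₁, h₂]
  field_simp
  ring

end PowerSeries

section Trigonometric

theorem eq_cos_of_hasDerivAt {I : Set ℝ} (hI : IsOpen I) (hI' : IsPreconnected I) (h0 : 0 ∈ I)
    {k : ℝ} {C S : ℝ → ℝ} (hC : ∀ θ ∈ I, HasDerivAt C (-(k * S θ)) θ)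
    (hS : ∀ θ ∈ I, HasDerivAt S (k * C θ) θ) (hC0 : C 0 = 1) (hS0 : S 0 = 0) {θ : ℝ}
    (hθ : θ ∈ I) : C θ = cos (k * θ) := by
  let E : ℝ → ℝ := fun θ ↦ (C θ - cos (k * θ)) ^ 2 + (S θ - sin (k * θ)) ^ 2
  have hE : ∀ θ ∈ I, HasDerivAt E 0 θ := fun θ hθ ↦ by
    have hk : HasDerivAt (fun θ ↦ k * θ) k θ := by simpa using (hasDerivAt_id θ).const_mul k
    refine ((((hC θ hθ).sub hk.cos).pow 2).add (((hS θ hθ).sub hk.sin).pow 2)).congr_deriv ?_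
    simp only [Pi.sub_apply]
    ring
  have hE0 : E θ = E 0 := hI.is_const_of_deriv_eq_zero hI'
    (fun θ hθ ↦ (hE θ hθ).differentiableAt.differentiableWithinAt) (fun θ hθ ↦ (hE θ hθ).deriv)
    hθ h0
  simp only [E, hC0, hS0, mul_zero, cos_zero, sin_zero, sub_self] at hE0
  nlinarith [sq_nonneg (C θ - cos (k * θ)), sq_nonneg (S θ - sin (k * θ))]

theorem abs_sin_sq_lt_one {θ : ℝ} (hθ : θ ∈ Ioo (-(π / 2)) (π / 2)) : |sin θ ^ 2| < 1 := by
  rw [abs_sq, sin_sq]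
  linarith [pow_pos (cos_pos_of_mem_Ioo hθ) 2]

variable (a : ℝ) {θ : ℝ}

theorem hasDerivAt_cos_mul_ordinaryHypergeometric_sin_sq (hθ : θ ∈ Ioo (-(π / 2)) (π / 2)) :
    HasDerivAt (fun θ ↦ cos θ * ₂F₁ a (1 - a) (1 / 2) (sin θ ^ 2))
      (-((1 - 2 * a) * ((1 - 2 * a) * (sin θ * ₂F₁ a (1 - a) (1 / 2 + 1) (sin θ ^ 2))))) θ := by
  have hx := abs_sin_sq_lt_one hθ
  have hF : HasDerivAt (fun θ ↦ ₂F₁ a (1 - a) (1 / 2) (sin θ ^ 2))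
      (deriv (₂F₁ a (1 - a) (1 / 2)) (sin θ ^ 2) * (2 * sin θ * cos θ)) θ := by
    have h := differentiableAt_ordinaryHypergeometric a (1 - a) (1 / 2) hx
    simpa using! h.hasDerivAt.comp θ ((hasDerivAt_sin θ).pow 2)
  refine ((hasDerivAt_cos θ).mul hF).congr_deriv ?_
  have h := mul_one_sub_mul_deriv_ordinaryHypergeometric a (1 - a) (c := 1 / 2)
    (fun k ↦ by linarith [(k.cast_nonneg : (0 : ℝ) ≤ k)]) hx
  rw [← cos_sq'] at h
  linear_combination 4 * sin θ * h

theorem hasDerivAt_sin_mul_ordinaryHypergeometric_sin_sq (hθ : θ ∈ Ioo (-(π / 2)) (π / 2)) :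
    HasDerivAt (fun θ ↦ sin θ * ₂F₁ a (1 - a) (1 / 2 + 1) (sin θ ^ 2))
      (cos θ * ₂F₁ a (1 - a) (1 / 2) (sin θ ^ 2)) θ := by
  have hx := abs_sin_sq_lt_one hθ
  have hF : HasDerivAt (fun θ ↦ ₂F₁ a (1 - a) (1 / 2 + 1) (sin θ ^ 2))
      (deriv (₂F₁ a (1 - a) (1 / 2 + 1)) (sin θ ^ 2) * (2 * sin θ * cos θ)) θ := by
    have h := differentiableAt_ordinaryHypergeometric a (1 - a) (1 / 2 + 1) hx
    simpa using! h.hasDerivAt.comp θ ((hasDerivAt_sin θ).pow 2)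
  refine ((hasDerivAt_sin θ).mul hF).congr_deriv ?_
  have h := mul_deriv_ordinaryHypergeometric_add_one a (1 - a) (c := 1 / 2)
    (fun k ↦ by linarith [(k.cast_nonneg : (0 : ℝ) ≤ k)]) hx
  linear_combination 2 * cos θ * h

theorem cos_mul_ordinaryHypergeometric_sin_sq (hθ : θ ∈ Ioo (-(π / 2)) (π / 2)) :
    cos θ * ₂F₁ a (1 - a) (1 / 2) (sin θ ^ 2) = cos ((1 - 2 * a) * θ) :=
  eq_cos_of_hasDerivAt isOpen_Ioo isPreconnected_Ioo ⟨by linarith [pi_pos], by linarith [pi_pos]⟩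
    (fun _ h ↦ hasDerivAt_cos_mul_ordinaryHypergeometric_sin_sq a h)
    (fun _ h ↦ (hasDerivAt_sin_mul_ordinaryHypergeometric_sin_sq a h).const_mul (1 - 2 * a))
    (by simp) (by simp) hθ

end Trigonometric

theorem ordinaryHypergeometric_one_third_two_thirds_half {v : ℝ} (hv₀ : 0 ≤ v) (hv₁ : v < 1 / 4) :
    ₂F₁ (1 / 3 : ℝ) (2 / 3) (1 / 2) (v * (3 - 4 * v) ^ 2) = (1 - 4 * v)⁻¹ := by
  set ψ := arcsin √v with hψ
  have hv : √v < 1 / 2 := by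
    rw [sqrt_lt' (by norm_num)]
    linarith
  have hsin : sin ψ = √v := sin_arcsin (by linarith [sqrt_nonneg v]) (by linarith)
  have hsin_sq : sin ψ ^ 2 = v := by rw [hsin, sq_sqrt hv₀]
  have hψ₀ : 0 ≤ ψ := arcsin_nonneg.2 (sqrt_nonneg v)
  have hψ₁ : ψ < π / 6 := by
    rw [hψ, arcsin_lt_iff_lt_sin' ⟨by linarith [pi_pos], by linarith [pi_pos]⟩, sin_pi_div_six]
    exact hv
  have hcos : 0 < cos ψ := cos_pos_of_mem_Ioo ⟨by linarith [pi_pos], by linarith [pi_pos]⟩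
  have h := cos_mul_ordinaryHypergeometric_sin_sq (1 / 3) (θ := 3 * ψ)
    ⟨by linarith [pi_pos], by linarith⟩
  have hsin3 : sin (3 * ψ) ^ 2 = v * (3 - 4 * v) ^ 2 := by
    rw [sin_three_mul, ← hsin_sq]
    ring
  have hcos3 : cos (3 * ψ) = cos ψ * (1 - 4 * v) := by
    rw [cos_three_mul, ← hsin_sq]
    linear_combination 4 * cos ψ * sin_sq_add_cos_sq ψ
  rw [hsin3, hcos3, show (1 - 2 * (1 / 3)) * (3 * ψ) = ψ by ring, mul_assoc,
    mul_eq_left₀ hcos.ne', show (1 : ℝ) - 1 / 3 = 2 / 3 by norm_num] at h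
  exact eq_inv_of_mul_eq_one_right h

section Euler

theorem ofReal_rpow_mul_one_sub_rpow (a b : ℝ) {x : ℝ} (hx : x ∈ Icc 0 1) :
    ((x ^ (a - 1) * (1 - x) ^ (b - 1) : ℝ) : ℂ) =
      (x : ℂ) ^ ((a : ℂ) - 1) * (1 - (x : ℂ)) ^ ((b : ℂ) - 1) := by
  rw [Complex.ofReal_mul, Complex.ofReal_cpow hx.1, Complex.ofReal_cpow (sub_nonneg.2 hx.2)]
  push_cast
  rfl

variable {a b : ℝ}

theorem intervalIntegrable_rpow_mul_one_sub_rpow (ha : 0 < a) (hb : 0 < b) :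
    IntervalIntegrable (fun x : ℝ ↦ x ^ (a - 1) * (1 - x) ^ (b - 1)) volume 0 1 := by
  have h := Complex.betaIntegral_convergent (u := a) (v := b) (by simpa) (by simpa)
  rw [intervalIntegrable_iff_integrableOn_Icc_of_le zero_le_one] at h ⊢
  refine IntegrableOn.congr_fun h.re (fun x hx ↦ ?_) measurableSet_Icc
  rw [← ofReal_rpow_mul_one_sub_rpow a b hx]
  exact Complex.ofReal_re _

theorem integral_rpow_mul_one_sub_rpow (ha : 0 < a) (hb : 0 < b) :
    ∫ x in (0 : ℝ)..1, x ^ (a - 1) * (1 - x) ^ (b - 1) = beta a b := by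
  rw [beta_eq_betaIntegralReal a b ha hb, Complex.betaIntegral,
    ← Complex.ofReal_re (∫ _ in _.._, _), ← intervalIntegral.integral_ofReal]
  congr 1
  refine intervalIntegral.integral_congr fun x hx ↦ ?_
  exact ofReal_rpow_mul_one_sub_rpow a b (by rwa [uIcc_of_le zero_le_one] at hx)

theorem Gamma_add_natCast_eq_ascPochhammer_mul {s : ℝ} (hs : 0 < s) (n : ℕ) :
    Gamma (s + n) = (ascPochhammer ℝ n).eval s * Gamma s := by
  induction n with
  | zero => simp
  | succ n ih =>
    rw [Nat.cast_succ, ← add_assoc, Gamma_add_one (by positivity), ih, ascPochhammer_succ_eval]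
    ring

theorem beta_add_natCast {s d : ℝ} (hs : 0 < s) (hd : 0 < d) (n : ℕ) :
    beta (s + n) d =
      (ascPochhammer ℝ n).eval s / (ascPochhammer ℝ n).eval (s + d) * beta s d := by
  rw [beta, beta, add_right_comm, Gamma_add_natCast_eq_ascPochhammer_mul hs,
    Gamma_add_natCast_eq_ascPochhammer_mul (add_pos hs hd)]
  ring

theorem hasSum_integral_rpow_mul_one_sub_rpow_mul_tsum {s d : ℝ} (hs : 0 < s) (hd : 0 < d)
    {u : ℕ → ℝ} (hu : Summable u) :
    HasSum (fun n ↦ (ascPochhammer ℝ n).eval s / (ascPochhammer ℝ n).eval (s + d) * beta s d * u n)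
      (∫ t in (0 : ℝ)..1, t ^ (s - 1) * (1 - t) ^ (d - 1) * ∑' n, u n * t ^ n) := by
  let w : ℝ → ℝ := fun t ↦ t ^ (s - 1) * (1 - t) ^ (d - 1)
  have hw : IntervalIntegrable w volume 0 1 := intervalIntegrable_rpow_mul_one_sub_rpow hs hd
  have hmoment (n : ℕ) : ∫ t in (0 : ℝ)..1, w t * t ^ n = beta (s + n) d := by
    rw [← integral_rpow_mul_one_sub_rpow (by positivity) hd]
    refine intervalIntegral.integral_congr_ae (.of_forall fun t ht ↦ ?_)
    rw [uIoc_of_le zero_le_one] at ht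
    rw [add_sub_right_comm, rpow_add_natCast ht.1.ne']
    ring
  have hbound {n : ℕ} {t : ℝ} (ht : t ∈ Ι (0 : ℝ) 1) : |u n * t ^ n| ≤ |u n| := by
    rw [uIoc_of_le zero_le_one] at ht
    rw [abs_mul, abs_of_nonneg (pow_nonneg ht.1.le n)]
    exact mul_le_of_le_one_right (abs_nonneg _) (pow_le_one₀ ht.1.le ht.2)
  have hsum := intervalIntegral.hasSum_integral_of_dominated_convergence (μ := volume)
    (F := fun n t ↦ w t * (u n * t ^ n)) (f := fun t ↦ w t * ∑' n, u n * t ^ n)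
    (fun n t ↦ |w t| * |u n|)
    (fun n ↦ hw.def'.aestronglyMeasurable.mul (by fun_prop))
    (fun n ↦ .of_forall fun t ht ↦ by
      rw [norm_mul, norm_eq_abs, norm_eq_abs]
      exact mul_le_mul_of_nonneg_left (hbound ht) (abs_nonneg _))
    (.of_forall fun t _ ↦ hu.abs.mul_left _)
    (by simpa only [tsum_mul_left] using hw.abs.mul_const (∑' n, |u n|))
    (.of_forall fun t ht ↦
      (Summable.of_norm_bounded hu.abs fun n ↦ hbound ht).hasSum.mul_left (w t))
  refine hsum.congr_fun fun n ↦ ?_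
  rw [← beta_add_natCast hs hd, ← hmoment, ← intervalIntegral.integral_mul_const]
  exact intervalIntegral.integral_congr fun t _ ↦ by ring

theorem bateman_integral_ordinaryHypergeometric (a b : ℝ) {s d z : ℝ}
    (hs : 0 < s) (hd : 0 < d) (hz : |z| < 1) :
    ∫ t in (0 : ℝ)..1, t ^ (s - 1) * (1 - t) ^ (d - 1) * ₂F₁ a b s (z * t) =
      beta s d * ₂F₁ a b (s + d) z := by
  have h := hasSum_integral_rpow_mul_one_sub_rpow_mul_tsum hs hd
    (hasSum_ordinaryHypergeometric a b s hz).summable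
  have hint : ∫ t in (0 : ℝ)..1, t ^ (s - 1) * (1 - t) ^ (d - 1) * ₂F₁ a b s (z * t) =
      ∫ t in (0 : ℝ)..1, t ^ (s - 1) * (1 - t) ^ (d - 1) *
        ∑' n, ordinaryHypergeometricCoefficient a b s n * z ^ n * t ^ n := by
    simp only [ordinaryHypergeometric_eq_tsum, mul_pow, mul_assoc, smul_eq_mul]
  rw [hint]
  refine h.unique (((hasSum_ordinaryHypergeometric a b (s + d) hz).mul_left _).congr_fun
    fun n ↦ ?_)
  have := (ascPochhammer_pos n s hs).ne'
  simp only [ordinaryHypergeometricCoefficient]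
  field_simp

theorem ordinaryHypergeometric_self (a : ℝ) {b x : ℝ} (hb : ∀ k : ℕ, (k : ℝ) ≠ -b)
    (hx : |x| < 1) : ₂F₁ a b b x = (1 - x) ^ (-a) := by
  have h := (one_add_rpow_hasFPowerSeriesOnBall_zero (a := -a)).hasSum (y := -x)
    (by simpa [enorm_eq_nnnorm, ← NNReal.coe_lt_one] using hx)
  rw [binomialSeries_eq_ordinaryHypergeometricSeries hb, neg_neg, zero_add,
    ← sub_eq_add_neg] at h
  refine (hasSum_ordinaryHypergeometric a b b hx).unique (h.congr_fun fun n ↦ ?_)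
  have hx' : (⇑(-ContinuousLinearMap.id ℝ ℝ) ∘ fun _ : Fin n ↦ -x) = fun _ ↦ x := by
    ext
    simp
  rw [FormalMultilinearSeries.compContinuousLinearMap_apply, hx',
    ordinaryHypergeometricSeries_apply_eq, smul_eq_mul]

theorem abs_mul_lt_one_of_mem_Icc {z t : ℝ} (hz : |z| < 1) (ht : t ∈ Icc 0 1) : |z * t| < 1 := by
  rw [abs_mul, abs_of_nonneg ht.1]
  exact (mul_le_of_le_one_right (abs_nonneg z) ht.2).trans_lt hz

theorem euler_integral_ordinaryHypergeometric (a : ℝ) {b d z : ℝ}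
    (hb : 0 < b) (hd : 0 < d) (hz : |z| < 1) :
    ∫ t in (0 : ℝ)..1, t ^ (b - 1) * (1 - t) ^ (d - 1) * (1 - z * t) ^ (-a) =
      beta b d * ₂F₁ a b (b + d) z := by
  rw [← bateman_integral_ordinaryHypergeometric a b hb hd hz]
  refine intervalIntegral.integral_congr fun t ht ↦ ?_
  rw [uIcc_of_le zero_le_one] at ht
  rw [ordinaryHypergeometric_self a (fun k ↦ by linarith [(k.cast_nonneg : (0 : ℝ) ≤ k)])
    (abs_mul_lt_one_of_mem_Icc hz ht)]

theorem ordinaryHypergeometric_pfaff_transformation (a : ℝ) {b d z : ℝ}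
    (hb : 0 < b) (hd : 0 < d) (hz : |z| < 1) (hz' : |z / (z - 1)| < 1) :
    ₂F₁ a b (b + d) z = (1 - z) ^ (-a) * ₂F₁ a d (b + d) (z / (z - 1)) := by
  have hz₁ : 0 < 1 - z := by linarith [(abs_lt.1 hz).2]
  have hβ : beta d b = beta b d := by rw [beta, beta, mul_comm, add_comm]
  have hsub {t : ℝ} (ht : t ∈ Icc 0 1) : (1 - z * (1 - t)) ^ (-a) =
      (1 - z) ^ (-a) * (1 - z / (z - 1) * t) ^ (-a) := by
    have hz'' : 0 ≤ 1 - z / (z - 1) * t := by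
      linarith [(abs_lt.1 (abs_mul_lt_one_of_mem_Icc hz' ht)).2]
    have : z - 1 ≠ 0 := by linarith
    rw [← mul_rpow hz₁.le hz'']
    congr 1
    field_simp
    ring
  refine mul_left_cancel₀ (beta_pos hb hd).ne' ?_
  calc beta b d * ₂F₁ a b (b + d) z
      = ∫ t in (0 : ℝ)..1, (1 - t) ^ (b - 1) * t ^ (d - 1) * (1 - z * (1 - t)) ^ (-a) := by
        rw [← euler_integral_ordinaryHypergeometric a hb hd hz]
        simpa using (intervalIntegral.integral_comp_sub_left (a := 0) (b := 1)
          (fun t ↦ t ^ (b - 1) * (1 - t) ^ (d - 1) * (1 - z * t) ^ (-a)) 1).symm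
    _ = ∫ t in (0 : ℝ)..1, (1 - z) ^ (-a) *
          (t ^ (d - 1) * (1 - t) ^ (b - 1) * (1 - z / (z - 1) * t) ^ (-a)) := by
        refine intervalIntegral.integral_congr fun t ht ↦ ?_
        rw [hsub (by rwa [uIcc_of_le zero_le_one] at ht)]
        ring
    _ = beta b d * ((1 - z) ^ (-a) * ₂F₁ a d (b + d) (z / (z - 1))) := by
        rw [intervalIntegral.integral_const_mul,
          euler_integral_ordinaryHypergeometric a hd hb hz', hβ, add_comm d]
        ring

end Euler

section Elliptic

theorem strictMonoOn_mul_three_sub_four_mul_sq :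
    StrictMonoOn (fun v : ℝ ↦ v * (3 - 4 * v) ^ 2) (Iic (1 / 4)) := by
  intro v _ b hb hvb
  have hv₀ : 0 < 1 - 4 * v := by linarith [mem_Iic.1 hb]
  have hb₀ : 0 ≤ 1 - 4 * b := by linarith [mem_Iic.1 hb]
  have h : b * (3 - 4 * b) ^ 2 - v * (3 - 4 * v) ^ 2 =
      (b - v) * (3 * (1 - 4 * v) + 3 * (1 - 4 * b) +
        ((1 - 4 * v) ^ 2 + (1 - 4 * v) * (1 - 4 * b) + (1 - 4 * b) ^ 2)) := by ring
  have : 0 < b - v := sub_pos.2 hvb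
  exact sub_pos.1 (h ▸ by positivity)

theorem exists_mul_three_sub_four_mul_sq_eq {α : ℝ} (hα : α ∈ Ioo 0 1) :
    ∃ b ∈ Ioo (0 : ℝ) (1 / 4), b * (3 - 4 * b) ^ 2 = α := by
  have hcont : ContinuousOn (fun v : ℝ ↦ v * (3 - 4 * v) ^ 2) (Icc 0 (1 / 4)) := by fun_prop
  exact intermediate_value_Ioo (by norm_num) hcont (by norm_num [hα.1, hα.2])

theorem mul_three_sub_four_mul_sq_mem_Ioo {b : ℝ} (hb : b ∈ Ioo 0 (1 / 4)) :
    b * (3 - 4 * b) ^ 2 ∈ Ioo 0 1 := by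
  have h₀ := strictMonoOn_mul_three_sub_four_mul_sq (by norm_num) hb.2.le hb.1
  have h₁ := strictMonoOn_mul_three_sub_four_mul_sq hb.2.le self_mem_Iic hb.2
  exact ⟨by simpa using h₀, h₁.trans_eq (by norm_num)⟩

theorem rpow_half_sub_one_mul_rpow_half_sub_one {x y : ℝ} (hx : 0 ≤ x) (hy : 0 ≤ y) :
    x ^ (1 / 2 - 1 : ℝ) * y ^ (1 / 2 - 1 : ℝ) = (√(x * y))⁻¹ := by
  rw [← mul_rpow hx hy, sqrt_eq_rpow, ← rpow_neg (mul_nonneg hx hy)]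
  norm_num

theorem integral_inv_sqrt_mul_ordinaryHypergeometric (a b : ℝ) {z : ℝ} (hz : |z| < 1) :
    ∫ t in (0 : ℝ)..1, (√(t * (1 - t)))⁻¹ * ₂F₁ a b (1 / 2) (z * t) = π * ₂F₁ a b 1 z := by
  have hπ : beta (1 / 2) (1 / 2) = π := by
    rw [beta, add_halves, Gamma_one, div_one, Gamma_one_half_eq, mul_self_sqrt pi_pos.le]
  have h := bateman_integral_ordinaryHypergeometric a b
    one_half_pos one_half_pos hz
  rw [hπ, add_halves] at h
  rw [← h]
  refine intervalIntegral.integral_congr fun t ht ↦ ?_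
  rw [uIcc_of_le zero_le_one] at ht
  rw [rpow_half_sub_one_mul_rpow_half_sub_one ht.1 (sub_nonneg.2 ht.2)]

theorem deriv_mul_ordinaryHypergeometric_cubic {α v : ℝ} (hv : v ∈ Ioo 0 (1 / 4))
    (hα : v * (3 - 4 * v) ^ 2 < α) {f : ℝ} (hf : f = v * (3 - 4 * v) ^ 2 / α) :
    3 * (3 - 4 * v) * (1 - 4 * v) / α *
        ((√(f * (1 - f)))⁻¹ * ₂F₁ (1 / 3 : ℝ) (2 / 3) (1 / 2) (α * f)) =
      3 * (√(v * (α - v * (3 - 4 * v) ^ 2)))⁻¹ := by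
  have hα₀ : 0 < α := (mul_three_sub_four_mul_sq_mem_Ioo hv).1.trans hα
  have h₃ : 0 < 3 - 4 * v := by linarith [hv.2]
  have h₁ : 0 < 1 - 4 * v := by linarith [hv.2]
  have hαf : α * f = v * (3 - 4 * v) ^ 2 := hf ▸ mul_div_cancel₀ _ hα₀.ne'
  have hsqrt : √(f * (1 - f)) = (3 - 4 * v) / α * √(v * (α - v * (3 - 4 * v) ^ 2)) := by
    rw [← sqrt_sq (div_pos h₃ hα₀).le, ← sqrt_mul (sq_nonneg _), hf]
    congr 1
    field_simp
  have := sqrt_pos.2 (mul_pos hv.1 (sub_pos.2 hα))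
  rw [hαf, hsqrt, ordinaryHypergeometric_one_third_two_thirds_half hv.1.le hv.2]
  field_simp

theorem pi_mul_ordinaryHypergeometric_one_third_two_thirds_one {α b : ℝ}
    (hb : b ∈ Ioo 0 (1 / 4)) (hα : b * (3 - 4 * b) ^ 2 = α) :
    π * ₂F₁ (1 / 3 : ℝ) (2 / 3) 1 α = 3 * ∫ v in 0..b, (√(v * (α - v * (3 - 4 * v) ^ 2)))⁻¹ := by
  obtain ⟨hα₀, hα₁⟩ := hα ▸ mul_three_sub_four_mul_sq_mem_Ioo hb
  let f : ℝ → ℝ := fun v ↦ v * (3 - 4 * v) ^ 2 / α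
  let f' : ℝ → ℝ := fun v ↦ 3 * (3 - 4 * v) * (1 - 4 * v) / α
  have hf (v : ℝ) : HasDerivAt f (f' v) v := by
    have h := ((hasDerivAt_id v).const_mul 4).const_sub 3
    refine (((hasDerivAt_id v).mul (h.pow 2)).div_const α).congr_deriv ?_
    simp only [f', Pi.pow_apply, id]
    ring
  have hf₀ : f 0 = 0 := by simp [f]
  have hf₁ : f b = 1 := by simp [f, hα, hα₀.ne']
  have hsubst := intervalIntegral.integral_deriv_smul_comp_of_deriv_nonneg (a := 0) (b := b)
    (g := fun t ↦ (√(t * (1 - t)))⁻¹ * ₂F₁ (1 / 3 : ℝ) (2 / 3) (1 / 2) (α * t))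
    (fun v _ ↦ (hf v).continuousAt.continuousWithinAt) (fun v _ ↦ hf v) (fun v hv ↦ by
      rw [max_eq_right hb.1.le] at hv
      have : 0 < 3 - 4 * v := by linarith [hv.2, hb.2]
      have : 0 < 1 - 4 * v := by linarith [hv.2, hb.2]
      positivity)
  rw [hf₀, hf₁] at hsubst
  rw [← integral_inv_sqrt_mul_ordinaryHypergeometric _ _ (abs_lt.2 ⟨by linarith, hα₁⟩), ← hsubst,
    ← intervalIntegral.integral_const_mul]
  refine intervalIntegral.integral_congr_Ioo_of_le hb.1.le fun v hv ↦ ?_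
  have hvα : v * (3 - 4 * v) ^ 2 < α := hα ▸ strictMonoOn_mul_three_sub_four_mul_sq
    (hv.2.trans hb.2).le hb.2.le hv.2
  exact deriv_mul_ordinaryHypergeometric_cubic ⟨hv.1, hv.2.trans hb.2⟩ hvα rfl

end Elliptic

section Lemniscate

/-- In the coordinate `v = X⁻¹`, the 3-isogeny with kernel at `X = 0` from the curve
`w ^ 2 = α * X ^ 3 - (3 * X - 4) ^ 2` has abscissa `isogenyNumerator α v / v`. -/
def isogenyNumerator (α v : ℝ) : ℝ :=
  α - 3 * v + 48 * v ^ 2 - 64 * v ^ 3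

/-- The ordinate of the 3-isogeny of `isogenyNumerator` is `isogenyOrdinateFactor α v * w`. -/
def isogenyOrdinateFactor (α v : ℝ) : ℝ :=
  α - 48 * v ^ 2 + 128 * v ^ 3

/-- When `8 * α ^ 2 + 20 * α = 1`, the 3-isogeny of `isogenyNumerator` goes to the lemniscatic curve
`y ^ 2 = x ^ 3 - 27 * (1 + 8 * α) * x`. This is the value on it of the function
`27 * (1 + 8 * α) / x ^ 2`, which turns the differential `dx / y` into that of a beta integral. -/
noncomputable def lemniscateIsogeny (α v : ℝ) : ℝ :=
  27 * (1 + 8 * α) * v ^ 2 / isogenyNumerator α v ^ 2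

variable {α v : ℝ}

theorem isogenyNumerator_pos (hα : 0 < α) (hv : v ∈ Icc 0 (1 / 4))
    (hvα : v * (3 - 4 * v) ^ 2 ≤ α) : 0 < isogenyNumerator α v := by
  obtain rfl | hv₀ := hv.1.eq_or_lt
  · simpa [isogenyNumerator] using hα
  · have h : isogenyNumerator α v =
        α - v * (3 - 4 * v) ^ 2 + v * (6 + 24 * v * (1 - 2 * v)) := by
      rw [isogenyNumerator]
      ring
    have : 0 ≤ α - v * (3 - 4 * v) ^ 2 := sub_nonneg.2 hvα
    have : 0 < 1 - 2 * v := by linarith [hv.2]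
    rw [h]
    positivity

theorem isogenyOrdinateFactor_pos (hv : 0 ≤ v) (hvα : v * (3 - 4 * v) ^ 2 < α) :
    0 < isogenyOrdinateFactor α v := by
  have h : isogenyOrdinateFactor α v =
      α - v * (3 - 4 * v) ^ 2 + 9 * v * (1 - 4 * v) ^ 2 := by
    rw [isogenyOrdinateFactor]
    ring
  have : 0 < α - v * (3 - 4 * v) ^ 2 := sub_pos.2 hvα
  rw [h]
  positivity

theorem hasDerivAt_lemniscateIsogeny (hn : isogenyNumerator α v ≠ 0) :
    HasDerivAt (lemniscateIsogeny α) (2 * (27 * (1 + 8 * α)) * v *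
      isogenyOrdinateFactor α v / isogenyNumerator α v ^ 3) v := by
  have hnum : HasDerivAt (isogenyNumerator α) (-3 + 96 * v - 192 * v ^ 2) v := by
    refine (((((hasDerivAt_id v).const_mul 3).const_sub α).add
      (((hasDerivAt_id v).pow 2).const_mul 48)).sub
      (((hasDerivAt_id v).pow 3).const_mul 64)).congr_deriv ?_
    simp only [id]
    ring
  refine ((((hasDerivAt_id v).pow 2).const_mul (27 * (1 + 8 * α))).div (hnum.pow 2)
    (pow_ne_zero 2 hn)).congr_deriv ?_
  simp only [id, Pi.pow_apply]
  field_simp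
  simp only [isogenyNumerator, isogenyOrdinateFactor]
  ring

theorem one_sub_lemniscateIsogeny (hα : 8 * α ^ 2 + 20 * α = 1)
    (hn : isogenyNumerator α v ≠ 0) :
    1 - lemniscateIsogeny α v = isogenyOrdinateFactor α v ^ 2 *
      (α - v * (3 - 4 * v) ^ 2) / isogenyNumerator α v ^ 3 := by
  rw [lemniscateIsogeny]
  field_simp
  simp only [isogenyNumerator, isogenyOrdinateFactor]
  linear_combination -54 * v ^ 3 * hα

theorem rpow_quarter_sub_one_mul_rpow_half_sub_one {k m n q : ℝ} (hk : 0 < k) (hm : 0 < m)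
    (hn : 0 < n) (hq : 0 < q) (hv : 0 < v) :
    2 * k * v * m / n ^ 3 *
        ((k * v ^ 2 / n ^ 2) ^ (1 / 4 - 1 : ℝ) * (m ^ 2 * q / n ^ 3) ^ (1 / 2 - 1 : ℝ)) =
      2 * k ^ (1 / 4 : ℝ) * (√(v * q))⁻¹ := by
  have hquarter : (k * v ^ 2 / n ^ 2) ^ (1 / 4 : ℝ) = k ^ (1 / 4 : ℝ) * √(v / n) := by
    rw [mul_div_assoc, ← div_pow, mul_rpow hk.le (by positivity),
      ← rpow_natCast_mul (by positivity), sqrt_eq_rpow]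
    norm_num
  have hhalf : (m ^ 2 * q / n ^ 3) ^ (1 / 2 : ℝ) = m / n * √(q / n) := by
    rw [← sqrt_eq_rpow, ← sqrt_sq (div_pos hm hn).le, ← sqrt_mul (sq_nonneg _)]
    congr 1
    field_simp
  have : 0 < √v := sqrt_pos.2 hv
  have : 0 < √n := sqrt_pos.2 hn
  have : 0 < √q := sqrt_pos.2 hq
  rw [rpow_sub_one (by positivity), rpow_sub_one (by positivity), hquarter, hhalf,
    sqrt_div hv.le, sqrt_div hq.le, sqrt_mul hv.le]
  field_simp
  rw [sq_sqrt hv.le, sq_sqrt hq.le, sq_sqrt hn.le]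
  ring

theorem deriv_mul_lemniscateIsogeny (hα : 8 * α ^ 2 + 20 * α = 1) (hv : v ∈ Ioo 0 (1 / 4))
    (hvα : v * (3 - 4 * v) ^ 2 < α) :
    2 * (27 * (1 + 8 * α)) * v * isogenyOrdinateFactor α v / isogenyNumerator α v ^ 3 *
        (lemniscateIsogeny α v ^ (1 / 4 - 1 : ℝ) *
          (1 - lemniscateIsogeny α v) ^ (1 / 2 - 1 : ℝ)) =
      2 * (27 * (1 + 8 * α)) ^ (1 / 4 : ℝ) * (√(v * (α - v * (3 - 4 * v) ^ 2)))⁻¹ := by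
  have hα₀ : 0 < α := (mul_three_sub_four_mul_sq_mem_Ioo hv).1.trans hvα
  have hn := isogenyNumerator_pos hα₀ (Ioo_subset_Icc_self hv) hvα.le
  have hm := isogenyOrdinateFactor_pos hv.1.le hvα
  rw [one_sub_lemniscateIsogeny hα hn.ne', lemniscateIsogeny]
  exact rpow_quarter_sub_one_mul_rpow_half_sub_one (by positivity) hm hn (sub_pos.2 hvα) hv.1

theorem integral_inv_sqrt_eq_beta {b : ℝ} (hα : 8 * α ^ 2 + 20 * α = 1) (hb : b ∈ Ioo 0 (1 / 4))
    (hbα : b * (3 - 4 * b) ^ 2 = α) :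
    2 * (27 * (1 + 8 * α)) ^ (1 / 4 : ℝ) * ∫ v in 0..b, (√(v * (α - v * (3 - 4 * v) ^ 2)))⁻¹ =
      beta (1 / 4) (1 / 2) := by
  have hα₀ : 0 < α := (hbα ▸ mul_three_sub_four_mul_sq_mem_Ioo hb).1
  have hlt {v : ℝ} (hv : v ∈ Ioo 0 b) : v * (3 - 4 * v) ^ 2 < α :=
    hbα ▸ strictMonoOn_mul_three_sub_four_mul_sq (hv.2.trans hb.2).le hb.2.le hv.2
  have hn {v : ℝ} (hv : v ∈ Icc 0 b) : 0 < isogenyNumerator α v :=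
    isogenyNumerator_pos hα₀ ⟨hv.1, hv.2.trans hb.2.le⟩ <|
      hbα ▸ strictMonoOn_mul_three_sub_four_mul_sq.monotoneOn (hv.2.trans hb.2.le) hb.2.le hv.2
  have hr₀ : lemniscateIsogeny α 0 = 0 := by simp [lemniscateIsogeny]
  have hr₁ : lemniscateIsogeny α b = 1 := by
    have h := one_sub_lemniscateIsogeny hα (hn (right_mem_Icc.2 hb.1.le)).ne'
    rw [hbα, sub_self, mul_zero, zero_div] at h
    exact (sub_eq_zero.1 h).symm
  have hsubst := intervalIntegral.integral_deriv_smul_comp_of_deriv_nonneg (a := 0) (b := b)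
    (f := lemniscateIsogeny α) (g := fun t ↦ t ^ (1 / 4 - 1 : ℝ) * (1 - t) ^ (1 / 2 - 1 : ℝ))
    (fun v hv ↦ (hasDerivAt_lemniscateIsogeny
      (hn (uIcc_of_le hb.1.le ▸ hv)).ne').continuousAt.continuousWithinAt)
    (fun v hv ↦ hasDerivAt_lemniscateIsogeny (hn (by
      rw [min_eq_left hb.1.le, max_eq_right hb.1.le] at hv
      exact Ioo_subset_Icc_self hv)).ne')
    (fun v hv ↦ by
      rw [min_eq_left hb.1.le, max_eq_right hb.1.le] at hv
      have := hn (Ioo_subset_Icc_self hv)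
      have := isogenyOrdinateFactor_pos hv.1.le (hlt hv)
      have := hv.1
      positivity)
  rw [hr₀, hr₁, integral_rpow_mul_one_sub_rpow (by norm_num) one_half_pos] at hsubst
  rw [← hsubst, ← intervalIntegral.integral_const_mul]
  refine intervalIntegral.integral_congr_Ioo_of_le hb.1.le fun v hv ↦ ?_
  exact (deriv_mul_lemniscateIsogeny hα ⟨hv.1, hv.2.trans hb.2⟩ (hlt hv)).symm

end Lemniscate

theorem pi_mul_ordinaryHypergeometric_one_third_two_thirds_one_eq_beta {α : ℝ} (hα₀ : 0 < α)
    (hα : 8 * α ^ 2 + 20 * α = 1) :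
    π * ₂F₁ (1 / 3 : ℝ) (2 / 3) 1 α =
      3 / (2 * (27 * (1 + 8 * α)) ^ (1 / 4 : ℝ)) * beta (1 / 4) (1 / 2) := by
  obtain ⟨b, hb, hbα⟩ := exists_mul_three_sub_four_mul_sq_eq (α := α) ⟨hα₀, by nlinarith⟩
  rw [pi_mul_ordinaryHypergeometric_one_third_two_thirds_one hb hbα,
    ← integral_inv_sqrt_eq_beta hα hb hbα, ← mul_assoc, div_mul_cancel₀ _ (by positivity)]

theorem beta_one_fourth_one_half : beta (1 / 4) (1 / 2) = Gamma (1 / 4) ^ 2 / (√2 * √π) := by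
  have hreflect : Gamma (1 / 4) * Gamma (1 - 1 / 4) = √2 * π := by
    rw [Gamma_mul_Gamma_one_sub, mul_one_div, sin_pi_div_four]
    field_simp
    exact (sq_sqrt zero_le_two).symm
  have hΓ : Gamma (1 - 1 / 4) ≠ 0 := (Gamma_pos_of_pos (by norm_num)).ne'
  have : √π ≠ 0 := (sqrt_pos.2 pi_pos).ne'
  rw [beta, show (1 / 4 + 1 / 2 : ℝ) = 1 - 1 / 4 by norm_num, Gamma_one_half_eq,
    div_eq_div_iff hΓ (by positivity)]
  linear_combination Gamma (1 / 4) * √2 * mul_self_sqrt pi_pos.le - Gamma (1 / 4) * hreflect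

theorem rpow_three_halves {x : ℝ} (hx : 0 ≤ x) : x ^ (3 / 2 : ℝ) = x * √x := by
  rw [show (3 / 2 : ℝ) = 1 + 1 / 2 by norm_num, rpow_one_add' hx (by norm_num), sqrt_eq_rpow]

theorem isogeny_scale_rpow_eq :
    (27 * (1 + 8 * ((3 * √3 - 5) / 4))) ^ (1 / 4 : ℝ) =
      3 * 2 ^ (1 / 4 : ℝ) * 3 ^ (1 / 8 : ℝ) / (√3 + 1) ^ (1 / 2 : ℝ) := by
  have h : 27 * (1 + 8 * ((3 * √3 - 5) / 4)) =
      3 ^ 4 * 2 * (3 : ℝ) ^ (1 / 2 : ℝ) / (√3 + 1) ^ 2 := by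
    rw [← sqrt_eq_rpow, eq_div_iff (by positivity)]
    linear_combination (162 * √3 + 81) * sq_sqrt (zero_le_three (α := ℝ))
  rw [h, div_rpow (by positivity) (by positivity), mul_rpow (by positivity) (by positivity),
    mul_rpow (by positivity) zero_le_two, ← rpow_mul zero_le_three,
    ← rpow_natCast_mul zero_le_three, ← rpow_natCast_mul (by positivity)]
  norm_num

theorem ordinaryHypergeometric_one_third_two_thirds_one_eq_Gamma :
    ₂F₁ (1 / 3 : ℝ) (2 / 3) 1 ((3 * √3 - 5) / 4) =
      (√3 + 1) ^ (1 / 2 : ℝ) / (2 * 2 ^ (1 / 4 : ℝ) * 3 ^ (1 / 8 : ℝ) * √2) *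
        (Gamma (1 / 4) ^ 2 / π ^ (3 / 2 : ℝ)) := by
  have hα₀ : 0 < (3 * √3 - 5) / 4 := by
    have : 5 / 3 < √3 := lt_sqrt_of_sq_lt (by norm_num)
    linarith
  have heval := pi_mul_ordinaryHypergeometric_one_third_two_thirds_one_eq_beta hα₀
    (by linear_combination 9 / 2 * sq_sqrt (zero_le_three (α := ℝ)))
  rw [beta_one_fourth_one_half, isogeny_scale_rpow_eq] at heval
  have := sqrt_pos.2 pi_pos
  refine mul_left_cancel₀ pi_ne_zero (heval.trans ?_)
  rw [rpow_three_halves pi_pos.le]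
  field_simp

theorem pfaff_factor_eq :
    (1 - (√3 - 2) / (3 * √3)) ^ (-(1 / 3) : ℝ) =
      3 ^ (1 / 2 : ℝ) / (2 ^ (1 / 3 : ℝ) * (√3 + 1) ^ (1 / 3 : ℝ)) := by
  have h : 1 - (√3 - 2) / (3 * √3) = 2 * (√3 + 1) / (3 : ℝ) ^ (3 / 2 : ℝ) := by
    rw [rpow_three_halves zero_le_three]
    field_simp
    ring
  rw [h, rpow_neg (by positivity), div_rpow (by positivity) (by positivity),
    mul_rpow zero_le_two (by positivity), ← rpow_mul zero_le_three, inv_div]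
  norm_num

theorem ordinaryHypergeometric_one_third_one_third_one_eq :
    ₂F₁ (1 / 3 : ℝ) (1 / 3) 1 ((√3 - 2) / (3 * √3)) =
      3 ^ (1 / 2 : ℝ) / (2 ^ (1 / 3 : ℝ) * (√3 + 1) ^ (1 / 3 : ℝ)) *
        ₂F₁ (1 / 3 : ℝ) (2 / 3) 1 ((3 * √3 - 5) / 4) := by
  have hs : √3 ^ 2 = 3 := sq_sqrt zero_le_three
  have hs₁ : 1 < √3 := lt_sqrt_of_sq_lt (by norm_num)
  have hs₂ : √3 < 2 := (sqrt_lt' two_pos).2 (by norm_num)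
  have hz : |(√3 - 2) / (3 * √3)| < 1 := by
    rw [abs_lt, lt_div_iff₀ (by positivity), div_lt_one (by positivity)]
    constructor <;> linarith
  have hα : (√3 - 2) / (3 * √3) / ((√3 - 2) / (3 * √3) - 1) = (3 * √3 - 5) / 4 := by
    rw [div_sub_one (by positivity), div_div_div_cancel_right₀ (by positivity),
      div_eq_div_iff (by linarith) (by norm_num)]
    linear_combination 6 * hs
  have hα' : |(3 * √3 - 5) / 4| < 1 := by
    rw [abs_lt]
    constructor <;> linarith
  have hpfaff := ordinaryHypergeometric_pfaff_transformation (1 / 3)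
    (b := 1 / 3) (d := 2 / 3) (by norm_num) (by norm_num) hz (by rwa [hα])
  rwa [pfaff_factor_eq, hα, show (1 / 3 + 2 / 3 : ℝ) = 1 by norm_num] at hpfaff

theorem evaluation_constant_eq :
    3 ^ (3 / 8 : ℝ) / (2 ^ (1 / 12 : ℝ) * 4) * (√3 + 1) ^ (1 / 6 : ℝ) =
      3 ^ (1 / 2 : ℝ) / (2 ^ (1 / 3 : ℝ) * (√3 + 1) ^ (1 / 3 : ℝ)) *
        ((√3 + 1) ^ (1 / 2 : ℝ) / (2 * 2 ^ (1 / 4 : ℝ) * 3 ^ (1 / 8 : ℝ) * √2)) := by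
  have h₂ : (2 : ℝ) ^ (1 / 12 : ℝ) * 4 = 2 * 2 ^ (1 / 3 : ℝ) * 2 ^ (1 / 4 : ℝ) * √2 := by
    rw [sqrt_eq_rpow, ← rpow_one_add' zero_le_two (by norm_num), ← rpow_add two_pos,
      ← rpow_add two_pos, show (4 : ℝ) = 2 ^ (2 : ℝ) by norm_num, ← rpow_add two_pos]
    norm_num
  have h₃ : (3 : ℝ) ^ (3 / 8 : ℝ) = 3 ^ (1 / 2 : ℝ) / 3 ^ (1 / 8 : ℝ) := by
    rw [← rpow_sub three_pos]
    norm_num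
  have hs : (√3 + 1) ^ (1 / 6 : ℝ) = (√3 + 1) ^ (1 / 2 : ℝ) / (√3 + 1) ^ (1 / 3 : ℝ) := by
    rw [← rpow_sub (by positivity)]
    norm_num
  rw [h₂, h₃, hs]
  field_simp

/-- Pfaff-transformed evaluation. -/
theorem pfaff_transformed_evaluation :
    hyp2F1 (1/3) (1/3) 1 ((Real.sqrt 3 - 2) / (3 * Real.sqrt 3)) =
      (3:ℝ) ^ ((3:ℝ)/8) / ((2:ℝ) ^ ((1:ℝ)/12) * 4 * π ^ ((3:ℝ)/2)) *
        (Real.sqrt 3 + 1) ^ ((1:ℝ)/6) * Real.Gamma (1/4) ^ 2 := by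
  rw [hyp2F1_eq_ordinaryHypergeometric, ordinaryHypergeometric_one_third_one_third_one_eq,
    ordinaryHypergeometric_one_third_two_thirds_one_eq_Gamma, ← mul_assoc,
    ← evaluation_constant_eq]
  ring
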